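/- Assume p₁ > 0, p₁p₂ < 1, λ₂ < μ₂c₂, and λ₁p₁ + λ₂ > μ₁c₁p₁ + μ₂c₂. Let x₁, x₂ be real numbers with 0 < x₁ < x₂ < 1, Δ₂(x₁) = Δ₂(x₂) = 0, and Δ₂(x) < 0 for all x ∈ (x₁,x₂). Let π be an invariant distribution of the random walk (m̄_c(t)). Then π(0,0) = (λ₂ + λ₁p₁ − μ₁c₁p₁ − μ₂c₂) / (p₁·(λ₁ + λ₂p₂)·φ_Y(1)), where φ_Y(1) = exp((1/π)·∫_{x₁}^{x₂} (μ₁c₁x² − λ₁)·Θ_Y(x)/(x·h₁(x,1)) dx) and Θ_Y(x) = arctan((1−p₁p₂)·√(−Δ₂(x)) / ((1−p₁p₂)·(μ₁c₁x² − (λ₁+λ₂+μ₁c₁+μ₂c₂)x + λ₁) − 2R_Y(x))). -/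

import Mathlib

/-- Δ₂(x) = (μ₁c₁x² − (λ₁+λ₂+μ₁c₁+μ₂c₂)x + λ₁)² − 4μ₂c₂λ₂x² -/
noncomputable def Delta2 (la1 la2 mu1 mu2 c1 c2 : ℝ) (x : ℝ) : ℝ :=
  (mu1 * c1 * x ^ 2 - (la1 + la2 + mu1 * c1 + mu2 * c2) * x + la1) ^ 2
    - 4 * mu2 * c2 * la2 * x ^ 2

/-- R_Y(x) = p₁μ₁c₁(1−p₂)x² + (p₁p₂(μ₁c₁+μ₂c₂) − (1−p₂)(λ₂+λ₁p₁))x − p₂(λ₂+λ₁p₁) -/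
noncomputable def RY (la1 la2 mu1 mu2 c1 c2 p1 p2 : ℝ) (x : ℝ) : ℝ :=
  p1 * mu1 * c1 * (1 - p2) * x ^ 2
    + (p1 * p2 * (mu1 * c1 + mu2 * c2) - (1 - p2) * (la2 + la1 * p1)) * x
    - p2 * (la2 + la1 * p1)

/-- The kernel h₁(x,y) restricted to real arguments. -/
noncomputable def h1r (la1 la2 mu1 mu2 c1 c2 : ℝ) (x y : ℝ) : ℝ :=
  -(mu1 * c1) * x ^ 2 * y - mu2 * c2 * x * y ^ 2
    + (la1 + la2 + mu1 * c1 + mu2 * c2) * x * y - la1 * y - la2 * x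

/-- Θ_Y(x), the argument function appearing in the solution of the
Riemann–Hilbert problem. -/
noncomputable def ThetaY (la1 la2 mu1 mu2 c1 c2 p1 p2 : ℝ) (x : ℝ) : ℝ :=
  Real.arctan ((1 - p1 * p2) * Real.sqrt (-(Delta2 la1 la2 mu1 mu2 c1 c2 x))
    / ((1 - p1 * p2) * (mu1 * c1 * x ^ 2 - (la1 + la2 + mu1 * c1 + mu2 * c2) * x + la1)
        - 2 * RY la1 la2 mu1 mu2 c1 c2 p1 p2 x))

/-- φ_Y(1) = exp((1/π)·∫_{x₁}^{x₂} (μ₁c₁x² − λ₁)Θ_Y(x)/(x·h₁(x,1)) dx). -/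
noncomputable def phiY1 (la1 la2 mu1 mu2 c1 c2 p1 p2 x1 x2 : ℝ) : ℝ :=
  Real.exp ((1 / Real.pi) * ∫ x in x1..x2,
    (mu1 * c1 * x ^ 2 - la1) * ThetaY la1 la2 mu1 mu2 c1 c2 p1 p2 x
      / (x * h1r la1 la2 mu1 mu2 c1 c2 x 1))

/-- π is an invariant (stationary) probability distribution of the random walk (m̄_c(t)):
nonnegative, sums to 1, and satisfies the balance equations. -/
def IsInvariantDist (la1 la2 mu1 mu2 l1 l2 p1 p2 : ℝ) (π : ℕ × ℕ → ℝ) : Prop :=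
  (∀ m, 0 ≤ π m) ∧ (∑' m : ℕ × ℕ, π m = 1) ∧
  ∀ m1 m2 : ℕ,
    π (m1, m2) * (mu1 * l1 + mu2 * l2
        + (la1 + p2 * la2 * (if m2 = 0 then 1 else 0)) * (if 0 < m1 then 1 else 0)
        + (la2 + p1 * la1 * (if m1 = 0 then 1 else 0)) * (if 0 < m2 then 1 else 0))
    = mu1 * l1 * π (m1 - 1, m2) * (if 0 < m1 then 1 else 0)
      + mu2 * l2 * π (m1, m2 - 1) * (if 0 < m2 then 1 else 0)
      + (la1 + p2 * la2 * (if m2 = 0 then 1 else 0)) * π (m1 + 1, m2)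
      + (la2 + p1 * la1 * (if m1 = 0 then 1 else 0)) * π (m1, m2 + 1)

/-!
The generating function `P` of an invariant distribution satisfies a functional equation expressing
`h₁(x, y) P(x, y)` through the edge functions `P(0, y)`, `P(x, 0)` and `P(0, 0)`. Every point `y` of
the circle `|y| = r`, where `μ₂ c₂ r² = λ₂`, lies over a real root `x ∈ (0, 1)` of `h₁(x, y) = 0`.
There the functional equation equates an explicit multiple of the normalised edge function `H(y)`
with an explicit multiple of a positive number. This determines `arg H` on the circle and shows that
`Re H > 0` there, hence on the disc by the maximum principle. So `log H` is holomorphic, and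
subtracting the Herglotz representation from the Poisson one writes `log |H(r²)| - log |H(0)|` as an
integral of `arg H` over the circle; the substitution of the root `x` for the angle turns it into
the integral in `φ_Y(1)`. Finally `H(0)` is a multiple of `π(0, 0)`, and `H(r²)` is known because
`r² = λ₂ / (μ₂ c₂)` is the root other than `y = 1` of `h₁(1, y)`.
-/

section ComplexAnalysis

open Complex Metric

theorem re_pos_of_forall_frontier_re_pos {E : Type*} [NormedAddCommGroup E] [NormedSpace ℂ E]
    [Nontrivial E] [FiniteDimensional ℂ E] {U : Set E} {F : E → ℂ} (hU : Bornology.IsBounded U)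
    (hF : DiffContOnCl ℂ F U) (hpos : ∀ z ∈ frontier U, 0 < (F z).re) {z : E}
    (hz : z ∈ closure U) : 0 < (F z).re := by
  obtain ⟨w, hw, hmax⟩ := exists_mem_frontier_isMaxOn_norm hU
    (closure_nonempty_iff.1 ⟨z, hz⟩) (differentiable_exp.comp_diffContOnCl hF.neg)
  have hle : (F w).re ≤ (F z).re := by
    simpa [norm_exp] using hmax hz
  exact (hpos w hw).trans_le hle

theorem circleAverage_herglotzRieszKernel_mul {f : ℂ → ℂ} {c w : ℂ} {R : ℝ}
    (hf : DiffContOnCl ℂ f (ball c R)) (hw : w ∈ ball c R) :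
    Real.circleAverage (fun z => herglotzRieszKernel c w z * f z) c R = 2 * f w - f c := by
  have hR : |R| = R := abs_of_pos (pos_of_mem_ball hw)
  have hfs : ContinuousOn f (sphere c |R|) :=
    hR.symm ▸ hf.continuousOn_ball.mono sphere_subset_closedBall
  have hne : ∀ z ∈ sphere c |R|, z - w ≠ 0 := fun z hz h => by
    rw [hR, sub_eq_zero.1 h] at hz
    exact (mem_ball.1 hw).ne (mem_sphere.1 hz)
  have hcauchy : CircleIntegrable (fun z => (z - c) / (z - w) * f z) c R :=
    ContinuousOn.circleIntegrable' <| by fun_prop (disch := exact hne)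
  have hkernel : Set.EqOn (fun z => herglotzRieszKernel c w z * f z)
      ((2 : ℂ) • (fun z => (z - c) / (z - w) * f z) - f) (sphere c |R|) := fun z hz => by
    have hzw := hne z hz
    simp only [herglotzRieszKernel_def, sub_sub_sub_cancel_right, Pi.sub_apply, Pi.smul_apply,
      smul_eq_mul]
    field_simp
    ring
  rw [← hR] at hf hw
  have hvalue := hf.circleAverage_smul_div hw
  simp only [smul_eq_mul] at hvalue
  rw [Real.circleAverage_congr_sphere hkernel,
    Real.circleAverage_sub hcauchy.const_smul hfs.circleIntegrable', Real.circleAverage_smul,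
    hvalue, hf.circleAverage, smul_eq_mul]

theorem circleAverage_im_herglotzRieszKernel_mul_im {f : ℂ → ℂ} {c w : ℂ} {R : ℝ}
    (hf : DiffContOnCl ℂ f (ball c R)) (hw : w ∈ ball c R) :
    Real.circleAverage (fun z => (herglotzRieszKernel c w z).im * (f z).im) c R
      = (f c).re - (f w).re := by
  have hR : |R| = R := abs_of_pos (pos_of_mem_ball hw)
  have hK := continuousOn_herglotzRieszKernel_sphere hw
  have hfs : ContinuousOn f (sphere c |R|) :=
    hR.symm ▸ hf.continuousOn_ball.mono sphere_subset_closedBall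
  have hKf : CircleIntegrable (fun z => herglotzRieszKernel c w z * f z) c R :=
    (hK.mul hfs).circleIntegrable'
  have hPf : CircleIntegrable ((re ∘ herglotzRieszKernel c w) • f) c R :=
    ((continuous_re.comp_continuousOn hK).smul hfs).circleIntegrable'
  have hpoisson := hf.circleAverage_re_herglotzRieszKernel_smul hw
  calc Real.circleAverage (fun z => (herglotzRieszKernel c w z).im * (f z).im) c R
      = Real.circleAverage (reCLM ∘ ((re ∘ herglotzRieszKernel c w) • f
          - fun z => herglotzRieszKernel c w z * f z)) c R := by
        congr 1
        ext z
        simp [mul_re]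
    _ = (f w - (2 * f w - f c)).re := by
        rw [ContinuousLinearMap.circleAverage_comp_comm _ (hPf.sub hKf),
          Real.circleAverage_sub hPf hKf, hpoisson, circleAverage_herglotzRieszKernel_mul hf hw,
          reCLM_apply]
    _ = (f c).re - (f w).re := by
        simp only [sub_re, mul_re, re_ofNat, im_ofNat, zero_mul]
        ring

theorem circleAverage_im_herglotzRieszKernel_mul_arg {F : ℂ → ℂ} {c w : ℂ} {R : ℝ}
    (hF : DiffContOnCl ℂ F (ball c R)) (hpos : ∀ z ∈ sphere c R, 0 < (F z).re)
    (hw : w ∈ ball c R) :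
    Real.circleAverage (fun z => (herglotzRieszKernel c w z).im * (F z).arg) c R
      = Real.log ‖F c‖ - Real.log ‖F w‖ := by
  have hR : R ≠ 0 := (pos_of_mem_ball hw).ne'
  have hslit : ∀ z ∈ closure (ball c R), F z ∈ slitPlane := fun z hz =>
    .inl <| re_pos_of_forall_frontier_re_pos isBounded_ball hF
      (by rwa [frontier_ball c hR]) hz
  have hlog : DiffContOnCl ℂ (fun z => log (F z)) (ball c R) :=
    ⟨hF.differentiableOn.clog fun z hz => hslit z (subset_closure hz), hF.continuousOn.clog hslit⟩
  simpa only [log_re, log_im] using circleAverage_im_herglotzRieszKernel_mul_im hlog hw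

theorem one_sub_two_mul_cos_add_sq_pos {r : ℝ} (hr : |r| < 1) (θ : ℝ) :
    0 < 1 - 2 * r * Real.cos θ + r ^ 2 := by
  have hlt : r * Real.cos θ < 1 := calc
    r * Real.cos θ ≤ |r| * |Real.cos θ| := abs_mul r (Real.cos θ) ▸ le_abs_self _
    _ ≤ |r| := mul_le_of_le_one_right (abs_nonneg r) (Real.abs_cos_le_one θ)
    _ < 1 := hr
  calc 0 < (1 - r * Real.cos θ) ^ 2 + (r * Real.sin θ) ^ 2 :=
        add_pos_of_pos_of_nonneg (pow_pos (sub_pos.2 hlt) 2) (sq_nonneg _)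
    _ = 1 - 2 * r * Real.cos θ + r ^ 2 := by
        linear_combination r ^ 2 * Real.sin_sq_add_cos_sq θ

theorem circleMap_zero_eq_mk (r θ : ℝ) : circleMap 0 r θ = ⟨r * Real.cos θ, r * Real.sin θ⟩ := by
  apply Complex.ext <;> simp [circleMap, exp_re, exp_im]

theorem im_herglotzRieszKernel_sq_circleMap {r : ℝ} (hr : r ≠ 0) (θ : ℝ) :
    (herglotzRieszKernel 0 ((r : ℂ) ^ 2) (circleMap 0 r θ)).im
      = -(2 * (r * Real.sin θ / (1 - 2 * r * Real.cos θ + r ^ 2))) := by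
  have hnormSq : normSq (circleMap 0 r θ - (r : ℂ) ^ 2)
      = r ^ 2 * (1 - 2 * r * Real.cos θ + r ^ 2) := by
    rw [circleMap_zero_eq_mk, ← ofReal_pow, normSq_apply]
    simp only [sub_re, sub_im, ofReal_re, ofReal_im]
    linear_combination r ^ 2 * Real.sin_sq_add_cos_sq θ
  rw [herglotzRieszKernel_def, sub_zero, sub_zero, div_im, hnormSq, circleMap_zero_eq_mk,
    ← ofReal_pow]
  simp only [add_re, add_im, sub_re, sub_im, ofReal_re, ofReal_im]
  field_simp
  ring

theorem integral_mul_arg_circleMap {F : ℂ → ℂ} {r : ℝ} (hr : 0 < r) (hr1 : r < 1)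
    (hF : DiffContOnCl ℂ F (ball 0 r)) (hpos : ∀ z ∈ sphere (0 : ℂ) r, 0 < (F z).re) :
    ∫ θ in 0..2 * Real.pi, r * Real.sin θ / (1 - 2 * r * Real.cos θ + r ^ 2)
        * (F (circleMap 0 r θ)).arg
      = Real.pi * (Real.log ‖F ((r : ℂ) ^ 2)‖ - Real.log ‖F 0‖) := by
  have hmem : (r : ℂ) ^ 2 ∈ ball (0 : ℂ) r := by
    rw [mem_ball_zero_iff, norm_pow, norm_real, Real.norm_of_nonneg hr.le]
    exact pow_lt_self_of_lt_one₀ hr hr1 one_lt_two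
  have havg := circleAverage_im_herglotzRieszKernel_mul_arg hF hpos hmem
  simp only [Real.circleAverage_def, im_herglotzRieszKernel_sq_circleMap hr.ne', neg_mul,
    mul_assoc (2 : ℝ), intervalIntegral.integral_neg, intervalIntegral.integral_const_mul,
    smul_eq_mul] at havg
  rw [inv_mul_eq_iff_eq_mul₀ Real.two_pi_pos.ne'] at havg
  simp only [mul_assoc] at havg ⊢
  linarith

theorem arg_eq_arctan_of_re_pos {z : ℂ} (hz : 0 < z.re) : z.arg = Real.arctan (z.im / z.re) := by
  have h := abs_lt.1 (abs_arg_lt_pi_div_two_iff.2 (.inl hz))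
  rw [← tan_arg, Real.arctan_tan h.1 h.2]

end ComplexAnalysis

theorem integral_zero_two_pi_of_reflection {f : ℝ → ℝ}
    (hf : IntervalIntegrable f MeasureTheory.volume 0 Real.pi)
    (hsymm : ∀ θ, f (2 * Real.pi - θ) = f θ) :
    ∫ θ in 0..2 * Real.pi, f θ = 2 * ∫ θ in 0..Real.pi, f θ := by
  have hpi : 2 * Real.pi - Real.pi = Real.pi := by ring
  have hreflect := intervalIntegral.integral_comp_sub_left (a := 0) (b := Real.pi) f (2 * Real.pi)
  have hf' := hf.comp_sub_left (2 * Real.pi)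
  simp only [hsymm, sub_zero, hpi] at hreflect hf'
  rw [← intervalIntegral.integral_add_adjacent_intervals hf hf'.symm, ← hreflect, two_mul]

section GeneratingFunction

theorem summable_ofReal_mul_of_norm_le {ι : Type*} {u : ι → ℝ} (hu : Summable u) {q : ι → ℂ}
    {C : ℝ} (hq : ∀ i, ‖q i‖ ≤ C) : Summable fun i => (u i : ℂ) * q i :=
  .of_norm_bounded (hu.norm.mul_right C) fun i => by
    rw [norm_mul, Complex.norm_real]
    exact mul_le_mul_of_nonneg_left (hq i) (norm_nonneg _)

theorem injective_succ_fst : Function.Injective fun m : ℕ × ℕ => (m.1 + 1, m.2) :=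
  Nat.succ_injective.prodMap Function.injective_id

theorem injective_succ_snd : Function.Injective fun m : ℕ × ℕ => (m.1, m.2 + 1) :=
  Function.injective_id.prodMap Nat.succ_injective

theorem hasSum_comp_succ_fst {g : ℕ × ℕ → ℂ} {a : ℂ} :
    HasSum (fun m : ℕ × ℕ => g (m.1 + 1, m.2)) a
      ↔ HasSum (fun m => if 0 < m.1 then g m else 0) a := by
  rw [← injective_succ_fst.hasSum_iff (f := fun m => if 0 < m.1 then g m else 0)]
  · simp [Function.comp_def]
  · rintro ⟨_ | m₁, m₂⟩ hm
    · simp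
    · exact absurd ⟨(m₁, m₂), rfl⟩ hm

theorem hasSum_comp_succ_snd {g : ℕ × ℕ → ℂ} {a : ℂ} :
    HasSum (fun m : ℕ × ℕ => g (m.1, m.2 + 1)) a
      ↔ HasSum (fun m => if 0 < m.2 then g m else 0) a := by
  rw [← injective_succ_snd.hasSum_iff (f := fun m => if 0 < m.2 then g m else 0)]
  · simp [Function.comp_def]
  · rintro ⟨m₁, _ | m₂⟩ hm
    · simp
    · exact absurd ⟨(m₁, m₂), rfl⟩ hm

/-- The rate at which a coordinate of the walk decreases: the service rate `la`, plus the rate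
`p * la'` diverted from the other coordinate when the latter, `n`, vanishes. -/
noncomputable def serviceRate (la la' p : ℝ) (n : ℕ) : ℝ := la + p * la' * (if n = 0 then 1 else 0)

/-- The infinitesimal generator of the random walk, applied to a function `f` of the state `m`. -/
noncomputable def generator (la1 la2 mu1 mu2 c1 c2 p1 p2 : ℝ) (f : ℕ × ℕ → ℂ) (m : ℕ × ℕ) : ℂ :=
  mu1 * c1 * (f (m.1 + 1, m.2) - f m) + mu2 * c2 * (f (m.1, m.2 + 1) - f m)
    + (if 0 < m.1 then serviceRate la1 la2 p2 m.2 * (f (m.1 - 1, m.2) - f m) else 0)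
    + (if 0 < m.2 then serviceRate la2 la1 p1 m.1 * (f (m.1, m.2 - 1) - f m) else 0)

/-- The probability generating function `∑ u(m₁, m₂) x ^ m₁ y ^ m₂`. As `0 ^ 0 = 1`, the generating
functions of the edges `m₁ = 0` and `m₂ = 0` are `genFun u 0` and `genFun u · 0`. -/
noncomputable def genFun (u : ℕ × ℕ → ℝ) (x y : ℂ) : ℂ := ∑' m, (u m : ℂ) * (x ^ m.1 * y ^ m.2)

/-- The kernel `h₁` at complex arguments. -/
noncomputable def kernelPoly (la1 la2 mu1 mu2 c1 c2 : ℝ) (x y : ℂ) : ℂ :=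
  -(mu1 * c1) * x ^ 2 * y - mu2 * c2 * x * y ^ 2
    + (la1 + la2 + mu1 * c1 + mu2 * c2) * x * y - la1 * y - la2 * x

variable {la1 la2 mu1 mu2 c1 c2 p1 p2 : ℝ} {π : ℕ × ℕ → ℝ}

theorem norm_serviceRate_le (la la' p : ℝ) (n : ℕ) :
    ‖(serviceRate la la' p n : ℂ)‖ ≤ |la| + |p * la'| := by
  rw [Complex.norm_real, serviceRate]
  refine (norm_add_le _ _).trans (add_le_add_right ?_ _)
  split_ifs <;> simp [mul_nonneg]

theorem IsInvariantDist.summable (hπ : IsInvariantDist la1 la2 mu1 mu2 c1 c2 p1 p2 π) :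
    Summable π :=
  of_not_not fun h => zero_ne_one <| (tsum_eq_zero_of_not_summable h).symm.trans hπ.2.1

theorem IsInvariantDist.swap (hπ : IsInvariantDist la1 la2 mu1 mu2 c1 c2 p1 p2 π) :
    IsInvariantDist la2 la1 mu2 mu1 c2 c1 p2 p1 (π ∘ Prod.swap) := by
  refine ⟨fun m => hπ.1 _, ((Equiv.prodComm ℕ ℕ).tsum_eq π).trans hπ.2.1, fun m₁ m₂ => ?_⟩
  have hbal := hπ.2.2 m₂ m₁
  simp only [Function.comp_apply, Prod.swap_prod_mk]
  linarith

theorem IsInvariantDist.hasSum_mul_generator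
    (hπ : IsInvariantDist la1 la2 mu1 mu2 c1 c2 p1 p2 π) {f : ℕ × ℕ → ℂ} {C : ℝ}
    (hf : ∀ m, ‖f m‖ ≤ C) :
    HasSum (fun m => (π m : ℂ) * generator la1 la2 mu1 mu2 c1 c2 p1 p2 f m) 0 := by
  have hsum := hπ.summable
  obtain ⟨A₁, hA₁⟩ := summable_ofReal_mul_of_norm_le hsum fun m => hf (m.1 + 1, m.2)
  obtain ⟨A₂, hA₂⟩ := summable_ofReal_mul_of_norm_le hsum fun m => hf (m.1, m.2 + 1)
  obtain ⟨S₁, hS₁⟩ := summable_ofReal_mul_of_norm_le (hsum.comp_injective injective_succ_fst)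
    (q := fun m => serviceRate la1 la2 p2 m.2 * f m) fun m =>
      (norm_mul_le _ _).trans <| mul_le_mul (norm_serviceRate_le ..) (hf m) (norm_nonneg _)
        (by positivity)
  obtain ⟨S₂, hS₂⟩ := summable_ofReal_mul_of_norm_le (hsum.comp_injective injective_succ_snd)
    (q := fun m => serviceRate la2 la1 p1 m.1 * f m) fun m =>
      (norm_mul_le _ _).trans <| mul_le_mul (norm_serviceRate_le ..) (hf m) (norm_nonneg _)
        (by positivity)
  have hA₁' := (hasSum_comp_succ_fst (g := fun m => π (m.1 - 1, m.2) * f m)).1 hA₁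
  have hA₂' := (hasSum_comp_succ_snd (g := fun m => π (m.1, m.2 - 1) * f m)).1 hA₂
  have hS₁' := (hasSum_comp_succ_fst
    (g := fun m => π m * (serviceRate la1 la2 p2 m.2 * f (m.1 - 1, m.2)))).1 hS₁
  have hS₂' := (hasSum_comp_succ_snd
    (g := fun m => π m * (serviceRate la2 la1 p1 m.1 * f (m.1, m.2 - 1)))).1 hS₂
  have hin := (((hA₁'.mul_left (mu1 * c1 : ℂ)).add (hA₂'.mul_left (mu2 * c2 : ℂ))).add hS₁).add hS₂
  have hout := (((hA₁.mul_left (mu1 * c1 : ℂ)).add (hA₂.mul_left (mu2 * c2 : ℂ))).add hS₁').add hS₂'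
  refine (sub_self (_ : ℂ) ▸ hout.sub hin).congr_fun fun m => ?_
  have hbal := congrArg (fun t : ℝ => (t : ℂ) * f m) (hπ.2.2 m.1 m.2)
  simp only [generator, serviceRate, Function.comp_apply] at hbal ⊢
  split_ifs at hbal ⊢ <;> push_cast at hbal ⊢ <;> linear_combination -hbal

theorem norm_pow_mul_pow_le_one {x y : ℂ} (hx : ‖x‖ ≤ 1) (hy : ‖y‖ ≤ 1) (j k : ℕ) :
    ‖x ^ j * y ^ k‖ ≤ 1 := by
  rw [norm_mul, norm_pow, norm_pow]
  exact mul_le_one₀ (pow_le_one₀ (norm_nonneg x) hx) (by positivity)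
    (pow_le_one₀ (norm_nonneg y) hy)

theorem hasSum_genFun {u : ℕ × ℕ → ℝ} (hu : Summable u) {x y : ℂ} (hx : ‖x‖ ≤ 1) (hy : ‖y‖ ≤ 1) :
    HasSum (fun m => (u m : ℂ) * (x ^ m.1 * y ^ m.2)) (genFun u x y) :=
  (summable_ofReal_mul_of_norm_le hu fun m => norm_pow_mul_pow_le_one hx hy m.1 m.2).hasSum

theorem genFun_comp_swap (u : ℕ × ℕ → ℝ) (x y : ℂ) :
    genFun (u ∘ Prod.swap) x y = genFun u y x := by
  rw [genFun, genFun, ← (Equiv.prodComm ℕ ℕ).tsum_eq]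
  simp [mul_comm]

theorem genFun_zero_zero (u : ℕ × ℕ → ℝ) : genFun u 0 0 = u (0, 0) := by
  rw [genFun, tsum_eq_single (0, 0)]
  · simp
  · rintro ⟨_ | j, _ | k⟩ hm <;> simp_all

theorem diffContOnCl_genFun {u : ℕ × ℕ → ℝ} (hu : Summable u) {x : ℂ} (hx : ‖x‖ ≤ 1) :
    DiffContOnCl ℂ (genFun u x) (Metric.ball 0 1) := by
  have hbound : ∀ m : ℕ × ℕ, ∀ y ∈ Metric.closedBall (0 : ℂ) 1,
      ‖(u m : ℂ) * (x ^ m.1 * y ^ m.2)‖ ≤ ‖u m‖ := fun m y hy => by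
    rw [norm_mul, Complex.norm_real]
    exact mul_le_of_le_one_right (norm_nonneg _)
      (norm_pow_mul_pow_le_one hx (mem_closedBall_zero_iff.1 hy) _ _)
  refine .mk_ball ?_ (continuousOn_tsum (fun m => by fun_prop) hu.norm hbound)
  exact Complex.differentiableOn_tsum_of_summable_norm hu.norm (fun m => by fun_prop)
    Metric.isOpen_ball fun m y hy => hbound m y (Metric.ball_subset_closedBall hy)

theorem mul_generator_monomial (x y : ℂ) (m : ℕ × ℕ) :
    x * y * generator la1 la2 mu1 mu2 c1 c2 p1 p2 (fun m => x ^ m.1 * y ^ m.2) m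
      = -kernelPoly la1 la2 mu1 mu2 c1 c2 x y * (x ^ m.1 * y ^ m.2)
        + la1 * (y * (x - 1) - p1 * x * (y - 1)) * (0 ^ m.1 * y ^ m.2)
        + la2 * (x * (y - 1) - p2 * y * (x - 1)) * (x ^ m.1 * 0 ^ m.2)
        + (p2 * la2 * y * (x - 1) + p1 * la1 * x * (y - 1)) * (0 ^ m.1 * 0 ^ m.2) := by
  rcases m with ⟨_ | j, _ | k⟩ <;>
  · simp only [generator, serviceRate, kernelPoly, pow_zero, pow_succ, mul_zero, zero_mul,
      Nat.succ_pos, lt_irrefl, Nat.succ_ne_zero, ↓reduceIte, Nat.add_sub_cancel]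
    push_cast
    ring

theorem IsInvariantDist.kernelPoly_mul_genFun
    (hπ : IsInvariantDist la1 la2 mu1 mu2 c1 c2 p1 p2 π) {x y : ℂ} (hx : ‖x‖ ≤ 1) (hy : ‖y‖ ≤ 1) :
    kernelPoly la1 la2 mu1 mu2 c1 c2 x y * genFun π x y
      = la1 * (y * (x - 1) - p1 * x * (y - 1)) * genFun π 0 y
        + la2 * (x * (y - 1) - p2 * y * (x - 1)) * genFun π x 0
        + (p2 * la2 * y * (x - 1) + p1 * la1 * x * (y - 1)) * π (0, 0) := by
  have h0 : ‖(0 : ℂ)‖ ≤ 1 := by simp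
  have hsum := hπ.summable
  have hbalance := (hπ.hasSum_mul_generator
    fun m => norm_pow_mul_pow_le_one hx hy m.1 m.2).mul_left (x * y)
  have hexpand := ((((hasSum_genFun hsum hx hy).mul_left
    (-kernelPoly la1 la2 mu1 mu2 c1 c2 x y)).add ((hasSum_genFun hsum h0 hy).mul_left
    (la1 * (y * (x - 1) - p1 * x * (y - 1))))).add ((hasSum_genFun hsum hx h0).mul_left
    (la2 * (x * (y - 1) - p2 * y * (x - 1))))).add ((hasSum_genFun hsum h0 h0).mul_left
    (p2 * la2 * y * (x - 1) + p1 * la1 * x * (y - 1)))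
  have hunique := hbalance.unique <| hexpand.congr_fun fun m => by
    rw [mul_left_comm, mul_generator_monomial]
    ring
  rw [genFun_zero_zero] at hunique
  linear_combination hunique

theorem IsInvariantDist.genFun_one_left (hπ : IsInvariantDist la1 la2 mu1 mu2 c1 c2 p1 p2 π)
    {y : ℂ} (hy : ‖y‖ ≤ 1) :
    (mu2 * c2 * y - la2) * genFun π 1 y
      = p1 * la1 * (genFun π 0 y - π (0, 0)) - la2 * genFun π 1 0 := by
  have hball : Set.EqOn (fun y : ℂ => (mu2 * c2 * y - la2) * genFun π 1 y)
      (fun y => p1 * la1 * (genFun π 0 y - π (0, 0)) - la2 * genFun π 1 0)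
      (Metric.ball 0 1) := fun y hy => by
    have hy1 : ‖y‖ < 1 := mem_ball_zero_iff.1 hy
    have hne : 1 - y ≠ 0 := sub_ne_zero.2 fun h => by simp [← h] at hy1
    have heq := hπ.kernelPoly_mul_genFun (x := 1) (by simp) hy1.le
    refine mul_left_cancel₀ hne ?_
    rw [kernelPoly] at heq
    linear_combination heq
  have h1 := (diffContOnCl_genFun hπ.summable (x := 1) (by simp)).continuousOn
  have h0 := (diffContOnCl_genFun hπ.summable (x := 0) (by simp)).continuousOn
  exact hball.of_subset_closure (by fun_prop) (by fun_prop) subset_closure subset_rfl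
    (by rwa [closure_ball _ one_ne_zero, mem_closedBall_zero_iff])

theorem IsInvariantDist.genFun_one_one (hπ : IsInvariantDist la1 la2 mu1 mu2 c1 c2 p1 p2 π) :
    genFun π 1 1 = 1 := by
  simp only [genFun, one_pow, mul_one]
  rw [← Complex.ofReal_tsum, hπ.2.1, Complex.ofReal_one]

theorem IsInvariantDist.eq_zero_of_eq_zero (hla1 : 0 < la1) (hla2 : 0 < la2) (ha1 : 0 ≤ mu1 * c1)
    (ha2 : 0 ≤ mu2 * c2) (hp1 : 0 ≤ p1) (hp2 : 0 ≤ p2)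
    (hπ : IsInvariantDist la1 la2 mu1 mu2 c1 c2 p1 p2 π) {j k : ℕ} (h : π (j, k) = 0) :
    π (j + 1, k) = 0 ∧ π (j, k + 1) = 0 := by
  have hrate : ∀ {la la' p : ℝ} (n : ℕ), 0 < la → 0 < la' → 0 ≤ p →
      0 < la + p * la' * (if n = 0 then 1 else 0) := by
    intros
    split_ifs <;> positivity
  have hindicator : ∀ {a : ℝ} (m : ℕ × ℕ) (n : ℕ), 0 ≤ a →
      0 ≤ a * π m * (if 0 < n then 1 else 0) := fun m n ha =>
    mul_nonneg (mul_nonneg ha (hπ.1 m)) (by split_ifs <;> simp)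
  have hbal := hπ.2.2 j k
  rw [h, zero_mul] at hbal
  have harr1 := hindicator (j - 1, k) j ha1
  have harr2 := hindicator (j, k - 1) k ha2
  have hrate1 := hrate k hla1 hla2 hp2
  have hrate2 := hrate j hla2 hla1 hp1
  have hserv1 := mul_nonneg hrate1.le (hπ.1 (j + 1, k))
  have hserv2 := mul_nonneg hrate2.le (hπ.1 (j, k + 1))
  exact ⟨(mul_eq_zero_iff_left hrate1.ne').1 (by linarith),
    (mul_eq_zero_iff_left hrate2.ne').1 (by linarith)⟩

theorem IsInvariantDist.zero_pos (hla1 : 0 < la1) (hla2 : 0 < la2) (ha1 : 0 ≤ mu1 * c1)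
    (ha2 : 0 ≤ mu2 * c2) (hp1 : 0 ≤ p1) (hp2 : 0 ≤ p2)
    (hπ : IsInvariantDist la1 la2 mu1 mu2 c1 c2 p1 p2 π) : 0 < π (0, 0) := by
  have hstep {j k : ℕ} := hπ.eq_zero_of_eq_zero hla1 hla2 ha1 ha2 hp1 hp2 (j := j) (k := k)
  refine (hπ.1 _).lt_of_ne' fun hzero => ?_
  have hedge : ∀ j, π (j, 0) = 0 := Nat.rec hzero fun _ h => (hstep h).1
  have hall : ∀ j k, π (j, k) = 0 := fun j => Nat.rec (hedge j) fun _ h => (hstep h).2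
  have hsum := hπ.2.1
  simp [hall] at hsum

/-- The normalised generating function of the edge `m₁ = 0` which solves the Riemann–Hilbert
problem. The edge `m₂ = 0` is obtained by exchanging the two coordinates. -/
noncomputable def edgeFun (la1 la2 p1 p2 : ℝ) (π : ℕ × ℕ → ℝ) (y : ℂ) : ℂ :=
  la1 * (1 - p1 * p2) * genFun π 0 y + p2 * (la2 + p1 * la1) * π (0, 0)

theorem edgeFun_zero : edgeFun la1 la2 p1 p2 π 0 = ((la1 + la2 * p2) * π (0, 0) : ℝ) := by
  rw [edgeFun, genFun_zero_zero]
  push_cast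
  ring

open scoped ComplexOrder in
theorem edgeFun_pos (hla1 : 0 < la1) (hla2 : 0 < la2) (hp1 : 0 ≤ p1) (hp2 : 0 < p2)
    (hp : p1 * p2 ≤ 1) (hπ : ∀ m, 0 ≤ π m) (hπ0 : 0 < π (0, 0)) {y : ℂ} (hy : 0 ≤ y) :
    0 < edgeFun la1 la2 p1 p2 π y := by
  have hgen : 0 ≤ genFun π 0 y := tsum_nonneg fun m =>
    mul_nonneg (Complex.zero_le_real.2 (hπ m)) (mul_nonneg (pow_nonneg le_rfl _) (pow_nonneg hy _))
  have hcoef : (0 : ℂ) ≤ la1 * (1 - p1 * p2) :=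
    mod_cast mul_nonneg hla1.le (sub_nonneg.2 hp)
  have hconst : (0 : ℂ) < p2 * (la2 + p1 * la1) * π (0, 0) := by
    exact_mod_cast (by positivity : 0 < p2 * (la2 + p1 * la1) * π (0, 0))
  exact add_pos_of_nonneg_of_pos (mul_nonneg hcoef hgen) hconst

theorem diffContOnCl_edgeFun (hπ : Summable π) :
    DiffContOnCl ℂ (edgeFun la1 la2 p1 p2 π) (Metric.ball 0 1) :=
  ((diffContOnCl_genFun hπ (by simp)).const_smul (la1 * (1 - p1 * p2) : ℂ)).add_const _

theorem IsInvariantDist.edgeFun_mul_eq (hπ : IsInvariantDist la1 la2 mu1 mu2 c1 c2 p1 p2 π)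
    {x y : ℂ} (hx : ‖x‖ ≤ 1) (hy : ‖y‖ ≤ 1) (hxy : kernelPoly la1 la2 mu1 mu2 c1 c2 x y = 0) :
    (p1 * x * (y - 1) - y * (x - 1)) * edgeFun la1 la2 p1 p2 π y
      = (x * (y - 1) - p2 * y * (x - 1)) * edgeFun la2 la1 p2 p1 (π ∘ Prod.swap) x := by
  have heq := hπ.kernelPoly_mul_genFun hx hy
  rw [hxy] at heq
  simp only [edgeFun, genFun_comp_swap, Function.comp_apply, Prod.swap_prod_mk]
  linear_combination (1 - p1 * p2 : ℂ) * heq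

theorem IsInvariantDist.mul_edgeFun_eq (hπ : IsInvariantDist la1 la2 mu1 mu2 c1 c2 p1 p2 π)
    {y : ℂ} (hy : ‖y‖ ≤ 1) (hy2 : mu2 * c2 * y = la2) :
    p1 * edgeFun la1 la2 p1 p2 π y
      = (la2 + la1 * p1 - mu1 * c1 * p1 - mu2 * c2 : ℝ) := by
  have hroot := hπ.genFun_one_left hy
  have hdrift2 := hπ.genFun_one_left (y := 1) (by simp)
  have hdrift1 := hπ.swap.genFun_one_left (y := 1) (by simp)
  simp only [genFun_comp_swap, Function.comp_apply, Prod.swap_prod_mk, hπ.genFun_one_one]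
    at hdrift1 hdrift2
  rw [hy2] at hroot
  rw [edgeFun]
  push_cast
  linear_combination (p1 * p2 - 1 : ℂ) * hroot + hdrift2 + p1 * hdrift1

end GeneratingFunction

section SmallRoot

/-- The smaller root `x` of the quadratic equation `a * x ^ 2 + l = b * x`. -/
noncomputable def smallRoot (a l b : ℝ) : ℝ := (b - √(b ^ 2 - 4 * a * l)) / (2 * a)

variable {a l b : ℝ}

theorem discrim_pos_of_add_lt (ha : 0 < a) (hb : a + l < b) : 0 < b ^ 2 - 4 * a * l := by
  nlinarith [sq_nonneg (b - 2 * a)]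

theorem sqrt_discrim_eq (ha : a ≠ 0) : √(b ^ 2 - 4 * a * l) = b - 2 * a * smallRoot a l b := by
  rw [smallRoot]
  field_simp
  ring

theorem smallRoot_eq (ha : 0 < a) (hb : a + l < b) :
    a * smallRoot a l b ^ 2 + l = b * smallRoot a l b := by
  have hsq := Real.sq_sqrt (discrim_pos_of_add_lt ha hb).le
  rw [sqrt_discrim_eq ha.ne'] at hsq
  refine mul_left_cancel₀ (mul_pos four_pos ha).ne' ?_
  linear_combination hsq

theorem smallRoot_pos (ha : 0 < a) (hl : 0 < l) (hb : a + l < b) : 0 < smallRoot a l b := by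
  have hal : 0 < a * l := mul_pos ha hl
  refine div_pos (sub_pos.2 ((Real.sqrt_lt' (by linarith)).2 ?_)) (by positivity)
  linarith

theorem smallRoot_lt_one (ha : 0 < a) (hb : a + l < b) : smallRoot a l b < 1 := by
  rw [smallRoot, div_lt_one (by positivity), sub_lt_comm]
  refine Real.lt_sqrt_of_sq_lt ?_
  nlinarith

theorem mul_one_add_smallRoot_lt (ha : 0 < a) (hb : a + l < b) :
    a * (1 + smallRoot a l b) < b := by
  have hprod : (1 - smallRoot a l b) * (a * (1 + smallRoot a l b) - b) = a + l - b := by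
    linear_combination -smallRoot_eq ha hb
  exact sub_neg.1 (neg_of_mul_neg_right (hprod.trans_lt (sub_neg.2 hb))
    (sub_pos.2 (smallRoot_lt_one ha hb)).le)

theorem eq_smallRoot (ha : 0 < a) (hb : a + l < b) {x : ℝ} (hx1 : x < 1)
    (hx : a * x ^ 2 + l = b * x) : x = smallRoot a l b := by
  have hprod : (x - smallRoot a l b) * (a * (x + smallRoot a l b) - b) = 0 := by
    linear_combination hx - smallRoot_eq ha hb
  have hother : a * (x + smallRoot a l b) < b :=
    (mul_lt_mul_of_pos_left (by linarith) ha).trans (mul_one_add_smallRoot_lt ha hb)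
  exact sub_eq_zero.1 ((mul_eq_zero_iff_right (sub_neg.2 hother).ne).1 hprod)

theorem smallRoot_lt_smallRoot (ha : 0 < a) (hl : 0 < l) (hb : a + l < b) {b' : ℝ} (hbb' : b < b') :
    smallRoot a l b' < smallRoot a l b := by
  have hb' := hb.trans hbb'
  have hprod : (smallRoot a l b' - smallRoot a l b) * (a * (smallRoot a l b' + smallRoot a l b) - b)
      = (b' - b) * smallRoot a l b' := by
    linear_combination smallRoot_eq ha hb' - smallRoot_eq ha hb
  have hpos : 0 < (b' - b) * smallRoot a l b' := mul_pos (sub_pos.2 hbb') (smallRoot_pos ha hl hb')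
  have hother : a * (smallRoot a l b' + smallRoot a l b) < b :=
    (mul_lt_mul_of_pos_left (by linarith [smallRoot_lt_one ha hb']) ha).trans
      (mul_one_add_smallRoot_lt ha hb)
  exact sub_neg.1 (neg_of_mul_pos_left (hprod ▸ hpos) (sub_neg.2 hother).le)

theorem sub_mul_smallRoot_sq (ha : 0 < a) (hb : a + l < b) :
    l - a * smallRoot a l b ^ 2 = smallRoot a l b * √(b ^ 2 - 4 * a * l) := by
  rw [sqrt_discrim_eq ha.ne']
  linear_combination smallRoot_eq ha hb

theorem hasDerivAt_smallRoot (ha : 0 < a) (hb : a + l < b) :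
    HasDerivAt (smallRoot a l) (-(smallRoot a l b / √(b ^ 2 - 4 * a * l))) b := by
  have hdiscrim := discrim_pos_of_add_lt ha hb
  have hsqrt : √(b ^ 2 - 4 * a * l) ≠ 0 := (Real.sqrt_pos.2 hdiscrim).ne'
  have hderiv := ((hasDerivAt_id b).sub
    ((((hasDerivAt_id b).pow 2).sub_const (4 * a * l)).sqrt hdiscrim.ne')).div_const (2 * a)
  refine hderiv.congr_deriv ?_
  simp only [id_eq, Pi.pow_apply, smallRoot]
  field_simp
  ring

end SmallRoot

section KernelCurve

open Complex ComplexConjugate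

/-- The root `x < 1` of `h₁(x, y) = 0` over the boundary point `y = r * exp (θ * I)` of the disc of
radius `r = √(λ₂ / (μ₂ c₂))`. It oscillates between the branch points of the kernel. -/
noncomputable def kernelCurve (la1 la2 mu1 mu2 c1 c2 r θ : ℝ) : ℝ :=
  smallRoot (mu1 * c1) la1
    (la1 + la2 + mu1 * c1 + mu2 * c2 - 2 * (mu2 * c2) * (r * Real.cos θ))

/-- The denominator in the definition of `Θ_Y`. -/
noncomputable def thetaDenom (la1 la2 mu1 mu2 c1 c2 p1 p2 x : ℝ) : ℝ :=
  (1 - p1 * p2) * (mu1 * c1 * x ^ 2 - (la1 + la2 + mu1 * c1 + mu2 * c2) * x + la1)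
    - 2 * RY la1 la2 mu1 mu2 c1 c2 p1 p2 x

/-- The argument of the solution of the Riemann–Hilbert problem at `r * exp (θ * I)`. -/
noncomputable def boundaryArg (la1 la2 mu1 mu2 c1 c2 p1 p2 r θ : ℝ) : ℝ :=
  Real.arctan ((1 - p1 * p2)
    * (2 * (mu2 * c2) * r * kernelCurve la1 la2 mu1 mu2 c1 c2 r θ * Real.sin θ)
      / thetaDenom la1 la2 mu1 mu2 c1 c2 p1 p2 (kernelCurve la1 la2 mu1 mu2 c1 c2 r θ))

variable {la1 la2 mu1 mu2 c1 c2 p1 p2 r x : ℝ}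

local notation "X" => kernelCurve la1 la2 mu1 mu2 c1 c2 r

theorem kernelPoly_eq_zero_of_normSq {y : ℂ} (hy : mu2 * c2 * normSq y = la2)
    (hx : mu1 * c1 * x ^ 2 + la1 = (la1 + la2 + mu1 * c1 + mu2 * c2 - 2 * (mu2 * c2) * y.re) * x) :
    kernelPoly la1 la2 mu1 mu2 c1 c2 x y = 0 := by
  have hquad : y ^ 2 = (2 * y.re : ℝ) * y - normSq y := by
    linear_combination y * add_conj y - mul_conj y
  have hx' := congrArg ((↑) : ℝ → ℂ) hx
  have hy' := congrArg ((↑) : ℝ → ℂ) hy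
  push_cast at hx' hy' hquad
  rw [kernelPoly]
  linear_combination -y * hx' - mu2 * c2 * x * hquad + x * hy'

theorem im_mul_conj_boundary_coeff (p1 p2 x : ℝ) (y : ℂ) :
    ((x * (y - 1) - p2 * y * (x - 1)) * conj (p1 * x * (y - 1) - y * (x - 1))).im
      = (1 - p1 * p2) * x * (1 - x) * y.im := by
  simp only [map_sub, map_mul, conj_ofReal, map_one, mul_re, mul_im, sub_re, sub_im, conj_re,
    conj_im, ofReal_re, ofReal_im, one_re, one_im]
  ring

theorem two_mul_re_mul_conj_boundary_coeff {y : ℂ} (hy : mu2 * c2 * normSq y = la2)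
    (hx : mu1 * c1 * x ^ 2 + la1 = (la1 + la2 + mu1 * c1 + mu2 * c2 - 2 * (mu2 * c2) * y.re) * x) :
    2 * (mu2 * c2) *
        ((x * (y - 1) - p2 * y * (x - 1)) * conj (p1 * x * (y - 1) - y * (x - 1))).re
      = (1 - x) * thetaDenom la1 la2 mu1 mu2 c1 c2 p1 p2 x := by
  rw [normSq_apply] at hy
  simp only [thetaDenom, RY, map_sub, map_mul, conj_ofReal, map_one, mul_re, mul_im, sub_re, sub_im,
    conj_re, conj_im, ofReal_re, ofReal_im, one_re, one_im]
  linear_combination (2 * (x - p2 * (x - 1)) * (p1 * x - x + 1)) * hy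
      + (-2 * p1 * x - (1 - x) * (1 + p1 * p2)) * hx

theorem re_pos_and_arg_eq_arctan {A B H : ℂ} {k : ℝ} (h : A * H = B * k) (hk : 0 < k)
    (hre : 0 < (B * conj A).re) :
    0 < H.re ∧ H.arg = Real.arctan ((B * conj A).im / (B * conj A).re) := by
  have hA : 0 < normSq A := normSq_pos.2 fun hA => by simp [hA] at hre
  have hH : H = (k / normSq A : ℝ) * (B * conj A) := by
    have hA' : (normSq A : ℂ) ≠ 0 := ofReal_ne_zero.2 hA.ne'
    push_cast
    field_simp
    linear_combination conj A * h - H * mul_conj A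
  have hpos : 0 < k / normSq A := div_pos hk hA
  rw [hH, re_ofReal_mul, arg_real_mul _ hpos]
  exact ⟨mul_pos hpos hre, arg_eq_arctan_of_re_pos hre⟩

theorem add_lt_kernelCurve_param (ha2 : 0 < mu2 * c2) (hr1 : |r| < 1) (hr : mu2 * c2 * r ^ 2 = la2)
    (θ : ℝ) :
    mu1 * c1 + la1 < la1 + la2 + mu1 * c1 + mu2 * c2 - 2 * (mu2 * c2) * (r * Real.cos θ) := by
  have h := mul_pos ha2 (one_sub_two_mul_cos_add_sq_pos hr1 θ)
  linarith

theorem kernelCurve_eq (ha1 : 0 < mu1 * c1) (ha2 : 0 < mu2 * c2) (hr1 : |r| < 1)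
    (hr : mu2 * c2 * r ^ 2 = la2) (θ : ℝ) :
    mu1 * c1 * X θ ^ 2 + la1
      = (la1 + la2 + mu1 * c1 + mu2 * c2 - 2 * (mu2 * c2) * (r * Real.cos θ)) * X θ :=
  smallRoot_eq ha1 (add_lt_kernelCurve_param ha2 hr1 hr θ)

theorem kernelCurve_pos (hla1 : 0 < la1) (ha1 : 0 < mu1 * c1) (ha2 : 0 < mu2 * c2) (hr1 : |r| < 1)
    (hr : mu2 * c2 * r ^ 2 = la2) (θ : ℝ) : 0 < X θ :=
  smallRoot_pos ha1 hla1 (add_lt_kernelCurve_param ha2 hr1 hr θ)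

theorem kernelCurve_lt_one (ha1 : 0 < mu1 * c1) (ha2 : 0 < mu2 * c2) (hr1 : |r| < 1)
    (hr : mu2 * c2 * r ^ 2 = la2) (θ : ℝ) : X θ < 1 :=
  smallRoot_lt_one ha1 (add_lt_kernelCurve_param ha2 hr1 hr θ)

theorem kernelCurve_two_pi_sub (θ : ℝ) : X (2 * Real.pi - θ) = X θ := by
  simp only [kernelCurve, Real.cos_two_pi_sub]

theorem hasDerivAt_kernelCurve (ha1 : 0 < mu1 * c1) (ha2 : 0 < mu2 * c2) (hr1 : |r| < 1)
    (hr : mu2 * c2 * r ^ 2 = la2) (θ : ℝ) :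
    HasDerivAt X (-(2 * (mu2 * c2) * r * X θ ^ 2 * Real.sin θ / (la1 - mu1 * c1 * X θ ^ 2))) θ := by
  have hparam := add_lt_kernelCurve_param (la1 := la1) (mu1 := mu1) (c1 := c1) ha2 hr1 hr θ
  have hderiv := (hasDerivAt_smallRoot ha1 hparam).comp θ
    ((((Real.hasDerivAt_cos θ).const_mul r).const_mul (2 * (mu2 * c2))).const_sub
      (la1 + la2 + mu1 * c1 + mu2 * c2))
  refine hderiv.congr_deriv ?_
  have hsqrt := (Real.sqrt_pos.2 (discrim_pos_of_add_lt ha1 hparam)).ne'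
  rw [kernelCurve, sub_mul_smallRoot_sq ha1 hparam]
  rcases eq_or_ne (smallRoot (mu1 * c1) la1
    (la1 + la2 + mu1 * c1 + mu2 * c2 - 2 * (mu2 * c2) * (r * Real.cos θ))) 0 with hzero | hzero
  · simp [hzero]
  · field_simp

theorem continuous_kernelCurve (ha1 : 0 < mu1 * c1) (ha2 : 0 < mu2 * c2) (hr1 : |r| < 1)
    (hr : mu2 * c2 * r ^ 2 = la2) : Continuous X :=
  continuous_iff_continuousAt.2 fun θ => (hasDerivAt_kernelCurve ha1 ha2 hr1 hr θ).continuousAt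

theorem kernelCurve_pi_lt_kernelCurve_zero (hla1 : 0 < la1) (ha1 : 0 < mu1 * c1)
    (ha2 : 0 < mu2 * c2) (hr0 : 0 < r) (hr1 : |r| < 1) (hr : mu2 * c2 * r ^ 2 = la2) :
    X Real.pi < X 0 := by
  refine smallRoot_lt_smallRoot ha1 hla1 (add_lt_kernelCurve_param ha2 hr1 hr 0) ?_
  rw [Real.cos_pi, Real.cos_zero]
  linarith [mul_pos ha2 hr0]

theorem eq_kernelCurve_of_Delta2_eq_zero (ha1 : 0 < mu1 * c1) (ha2 : 0 < mu2 * c2) (hr1 : |r| < 1)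
    (hr : mu2 * c2 * r ^ 2 = la2) (hx1 : x < 1) (hx : Delta2 la1 la2 mu1 mu2 c1 c2 x = 0) :
    x = X Real.pi ∨ x = X 0 := by
  have hsq : (mu1 * c1 * x ^ 2 - (la1 + la2 + mu1 * c1 + mu2 * c2) * x + la1) ^ 2
      = (2 * (mu2 * c2) * r * x) ^ 2 := by
    rw [Delta2] at hx
    linear_combination hx - 4 * mu2 * c2 * x ^ 2 * hr
  refine (sq_eq_sq_iff_eq_or_eq_neg.1 hsq).imp (fun h => ?_) fun h => ?_ <;>
  · refine eq_smallRoot ha1 (add_lt_kernelCurve_param ha2 hr1 hr _) hx1 ?_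
    simp only [Real.cos_pi, Real.cos_zero]
    linear_combination h

theorem endpoints_eq_kernelCurve (hla1 : 0 < la1) (ha1 : 0 < mu1 * c1) (ha2 : 0 < mu2 * c2)
    (hr0 : 0 < r) (hr1 : |r| < 1) (hr : mu2 * c2 * r ^ 2 = la2) {x1 x2 : ℝ} (hx12 : x1 < x2)
    (hx2 : x2 < 1) (hD1 : Delta2 la1 la2 mu1 mu2 c1 c2 x1 = 0)
    (hD2 : Delta2 la1 la2 mu1 mu2 c1 c2 x2 = 0) : x1 = X Real.pi ∧ x2 = X 0 := by
  have hlt : X Real.pi < X 0 := kernelCurve_pi_lt_kernelCurve_zero hla1 ha1 ha2 hr0 hr1 hr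
  rcases eq_kernelCurve_of_Delta2_eq_zero ha1 ha2 hr1 hr (hx12.trans hx2) hD1 with h1 | h1 <;>
  rcases eq_kernelCurve_of_Delta2_eq_zero ha1 ha2 hr1 hr hx2 hD2 with h2 | h2
  · exact absurd (h1.trans h2.symm) hx12.ne
  · exact ⟨h1, h2⟩
  · exact absurd hlt (h1 ▸ h2 ▸ hx12).asymm
  · exact absurd (h1.trans h2.symm) hx12.ne

theorem neg_Delta2_kernelCurve (ha1 : 0 < mu1 * c1) (ha2 : 0 < mu2 * c2) (hr1 : |r| < 1)
    (hr : mu2 * c2 * r ^ 2 = la2) (θ : ℝ) :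
    -Delta2 la1 la2 mu1 mu2 c1 c2 (X θ) = (2 * (mu2 * c2) * r * X θ * Real.sin θ) ^ 2 := by
  have hquad : mu1 * c1 * X θ ^ 2 - (la1 + la2 + mu1 * c1 + mu2 * c2) * X θ + la1
      = -(2 * (mu2 * c2) * r * Real.cos θ * X θ) := by
    linear_combination kernelCurve_eq (la1 := la1) ha1 ha2 hr1 hr θ
  rw [Delta2, hquad]
  linear_combination -4 * mu2 * c2 * X θ ^ 2 * hr
    - 4 * (mu2 * c2) ^ 2 * r ^ 2 * X θ ^ 2 * Real.sin_sq_add_cos_sq θ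

theorem ThetaY_kernelCurve (hla1 : 0 < la1) (ha1 : 0 < mu1 * c1) (ha2 : 0 < mu2 * c2) (hr0 : 0 ≤ r)
    (hr1 : |r| < 1) (hr : mu2 * c2 * r ^ 2 = la2) {θ : ℝ} (hθ : 0 ≤ Real.sin θ) :
    ThetaY la1 la2 mu1 mu2 c1 c2 p1 p2 (X θ)
      = boundaryArg la1 la2 mu1 mu2 c1 c2 p1 p2 r θ := by
  have hX := kernelCurve_pos hla1 ha1 ha2 hr1 hr θ
  rw [ThetaY, neg_Delta2_kernelCurve ha1 ha2 hr1 hr, Real.sqrt_sq (by positivity), boundaryArg,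
    thetaDenom]

theorem thetaDenom_kernelCurve_pos (hla1 : 0 < la1) (hla2 : 0 < la2) (ha1 : 0 < mu1 * c1)
    (ha2 : 0 < mu2 * c2) (hr0 : 0 < r) (hr1 : r < 1) (hr : mu2 * c2 * r ^ 2 = la2) (hp1 : 0 < p1)
    (hp2 : 0 ≤ p2) (hp : p1 * p2 ≤ 1) (hE2 : mu1 * c1 * p1 + mu2 * c2 < la1 * p1 + la2) (θ : ℝ) :
    0 < thetaDenom la1 la2 mu1 mu2 c1 c2 p1 p2 (X θ) := by
  have hr1' : |r| < 1 := (abs_of_pos hr0).trans_lt hr1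
  have hX0 := kernelCurve_pos hla1 ha1 ha2 hr1' hr θ
  have hX1 := kernelCurve_lt_one (la1 := la1) ha1 ha2 hr1' hr θ
  have hform : thetaDenom la1 la2 mu1 mu2 c1 c2 p1 p2 (X θ)
      = 2 * X θ * (p1 * (la1 - mu1 * c1 * X θ) - (mu2 * c2 - la2))
        + 2 * X θ * (mu2 * c2) * (1 - r) * (1 - r * (p1 * p2))
        + 2 * X θ * (1 + p1 * p2) * (mu2 * c2 * r * (1 - Real.cos θ))
        + 2 * p2 * la2 * (1 - X θ) := by
    subst hr
    rw [thetaDenom, RY]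
    linear_combination (1 + p1 * p2) * kernelCurve_eq (la1 := la1) ha1 ha2 hr1' rfl θ
  have hdrift : 0 < p1 * (la1 - mu1 * c1 * X θ) - (mu2 * c2 - la2) := by
    nlinarith [mul_pos (mul_pos hp1 ha1) (sub_pos.2 hX1)]
  have hrp : 0 ≤ 1 - r * (p1 * p2) := sub_nonneg.2 (mul_le_one₀ hr1.le (by positivity) hp)
  have hcos : 0 ≤ 1 - Real.cos θ := sub_nonneg.2 (Real.cos_le_one θ)
  have hr_lt : 0 < 1 - r := sub_pos.2 hr1
  have hX_lt : 0 < 1 - X θ := sub_pos.2 hX1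
  rw [hform]
  positivity

theorem exists_mul_sq_eq {a l : ℝ} (hl : 0 < l) (hla : l < a) :
    ∃ r : ℝ, 0 < r ∧ r < 1 ∧ a * r ^ 2 = l := by
  have ha : 0 < a := hl.trans hla
  refine ⟨√(l / a), Real.sqrt_pos.2 (div_pos hl ha), ?_, ?_⟩
  · rwa [Real.sqrt_lt' one_pos, one_pow, div_lt_one ha]
  · rw [Real.sq_sqrt (div_pos hl ha).le, mul_div_cancel₀ l ha.ne']

theorem boundaryArg_two_pi_sub (θ : ℝ) :
    boundaryArg la1 la2 mu1 mu2 c1 c2 p1 p2 r (2 * Real.pi - θ)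
      = -boundaryArg la1 la2 mu1 mu2 c1 c2 p1 p2 r θ := by
  simp only [boundaryArg, kernelCurve_two_pi_sub, Real.sin_two_pi_sub, mul_neg, neg_div,
    Real.arctan_neg]

theorem continuous_boundaryArg (ha1 : 0 < mu1 * c1) (ha2 : 0 < mu2 * c2) (hr1 : |r| < 1)
    (hr : mu2 * c2 * r ^ 2 = la2)
    (hdenom : ∀ θ, thetaDenom la1 la2 mu1 mu2 c1 c2 p1 p2 (X θ) ≠ 0) :
    Continuous (boundaryArg la1 la2 mu1 mu2 c1 c2 p1 p2 r) := by
  have hX : Continuous X := continuous_kernelCurve ha1 ha2 hr1 hr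
  have hD : Continuous fun θ => thetaDenom la1 la2 mu1 mu2 c1 c2 p1 p2 (X θ) := by
    simp only [thetaDenom, RY]
    fun_prop
  exact Real.continuous_arctan.comp (.div (by fun_prop) hD hdenom)

theorem sub_mul_kernelCurve_sq_pos (hla1 : 0 < la1) (ha1 : 0 < mu1 * c1) (ha2 : 0 < mu2 * c2)
    (hr1 : |r| < 1) (hr : mu2 * c2 * r ^ 2 = la2) (θ : ℝ) : 0 < la1 - mu1 * c1 * X θ ^ 2 := by
  have hparam := add_lt_kernelCurve_param (la1 := la1) (mu1 := mu1) (c1 := c1) ha2 hr1 hr θ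
  rw [kernelCurve, sub_mul_smallRoot_sq ha1 hparam]
  exact mul_pos (smallRoot_pos ha1 hla1 hparam) (Real.sqrt_pos.2 (discrim_pos_of_add_lt ha1 hparam))

theorem h1r_kernelCurve_one (ha1 : 0 < mu1 * c1) (ha2 : 0 < mu2 * c2) (hr1 : |r| < 1)
    (hr : mu2 * c2 * r ^ 2 = la2) (θ : ℝ) :
    h1r la1 la2 mu1 mu2 c1 c2 (X θ) 1
      = -(mu2 * c2 * (1 - 2 * r * Real.cos θ + r ^ 2) * X θ) := by
  rw [h1r]
  linear_combination X θ * hr - kernelCurve_eq (la1 := la1) ha1 ha2 hr1 hr θ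

theorem integral_kernelCurve (hla1 : 0 < la1) (ha1 : 0 < mu1 * c1) (ha2 : 0 < mu2 * c2)
    (hr0 : 0 ≤ r) (hr1 : |r| < 1) (hr : mu2 * c2 * r ^ 2 = la2) (g : ℝ → ℝ) :
    ∫ x in X Real.pi..X 0,
        (mu1 * c1 * x ^ 2 - la1) * g x / (x * h1r la1 la2 mu1 mu2 c1 c2 x 1)
      = 2 * ∫ θ in 0..Real.pi, r * Real.sin θ / (1 - 2 * r * Real.cos θ + r ^ 2) * g (X θ) := by
  have hX : ∀ θ, 0 < X θ := kernelCurve_pos hla1 ha1 ha2 hr1 hr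
  have hL : ∀ θ, 0 < la1 - mu1 * c1 * X θ ^ 2 := sub_mul_kernelCurve_sq_pos hla1 ha1 ha2 hr1 hr
  have hsubst := intervalIntegral.integral_deriv_smul_comp_of_deriv_nonpos (a := 0) (b := Real.pi)
    (g := fun x => (mu1 * c1 * x ^ 2 - la1) * g x / (x * h1r la1 la2 mu1 mu2 c1 c2 x 1))
    (continuous_kernelCurve ha1 ha2 hr1 hr).continuousOn
    (fun θ _ => hasDerivAt_kernelCurve (la1 := la1) ha1 ha2 hr1 hr θ) fun θ hθ => by
      rw [min_eq_left Real.pi_pos.le, max_eq_right Real.pi_pos.le] at hθ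
      have hsin := Real.sin_pos_of_mem_Ioo hθ
      have hLθ := hL θ
      exact neg_nonpos.2 (by positivity)
  rw [intervalIntegral.integral_symm, ← hsubst, ← intervalIntegral.integral_neg,
    ← intervalIntegral.integral_const_mul]
  refine intervalIntegral.integral_congr fun θ _ => ?_
  have hXθ := (hX θ).ne'
  have hLθ := (hL θ).ne'
  have hden := (one_sub_two_mul_cos_add_sq_pos hr1 θ).ne'
  have ha2' := ha2.ne'
  simp only [smul_eq_mul, Function.comp_apply, h1r_kernelCurve_one ha1 ha2 hr1 hr]
  generalize mu2 * c2 = b at *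
  generalize 1 - 2 * r * Real.cos θ + r ^ 2 = d at *
  rw [← neg_sub la1]
  generalize la1 - mu1 * c1 * X θ ^ 2 = L at *
  field_simp

theorem integral_ThetaY_kernelCurve (hla1 : 0 < la1) (ha1 : 0 < mu1 * c1) (ha2 : 0 < mu2 * c2)
    (hr0 : 0 ≤ r) (hr1 : |r| < 1) (hr : mu2 * c2 * r ^ 2 = la2)
    (hdenom : ∀ θ, thetaDenom la1 la2 mu1 mu2 c1 c2 p1 p2 (X θ) ≠ 0) :
    ∫ x in X Real.pi..X 0, (mu1 * c1 * x ^ 2 - la1) * ThetaY la1 la2 mu1 mu2 c1 c2 p1 p2 x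
        / (x * h1r la1 la2 mu1 mu2 c1 c2 x 1)
      = ∫ θ in 0..2 * Real.pi, r * Real.sin θ / (1 - 2 * r * Real.cos θ + r ^ 2)
        * boundaryArg la1 la2 mu1 mu2 c1 c2 p1 p2 r θ := by
  have hcont : Continuous fun θ => r * Real.sin θ / (1 - 2 * r * Real.cos θ + r ^ 2)
      * boundaryArg la1 la2 mu1 mu2 c1 c2 p1 p2 r θ :=
    .mul (.div (by fun_prop) (by fun_prop) fun θ => (one_sub_two_mul_cos_add_sq_pos hr1 θ).ne')
      (continuous_boundaryArg ha1 ha2 hr1 hr hdenom)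
  rw [integral_kernelCurve hla1 ha1 ha2 hr0 hr1 hr,
    integral_zero_two_pi_of_reflection (hcont.intervalIntegrable _ _) fun θ => by
      simp only [boundaryArg_two_pi_sub, Real.sin_two_pi_sub, Real.cos_two_pi_sub, mul_neg,
        neg_div, neg_mul, neg_neg]]
  congr 1
  refine intervalIntegral.integral_congr fun θ hθ => ?_
  rw [Set.uIcc_of_le Real.pi_pos.le] at hθ
  rw [ThetaY_kernelCurve hla1 ha1 ha2 hr0 hr1 hr (Real.sin_nonneg_of_mem_Icc hθ)]

theorem IsInvariantDist.re_edgeFun_pos_and_arg_eq {π : ℕ × ℕ → ℝ} (hla1 : 0 < la1) (hla2 : 0 < la2)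
    (ha1 : 0 ≤ mu1 * c1) (ha2 : 0 < mu2 * c2) (hp1 : 0 < p1) (hp2 : 0 ≤ p2) (hp : p1 * p2 ≤ 1)
    (hπ : IsInvariantDist la1 la2 mu1 mu2 c1 c2 p1 p2 π) (hx0 : 0 ≤ x) (hx1 : x < 1)
    (hdenom : 0 < thetaDenom la1 la2 mu1 mu2 c1 c2 p1 p2 x) {y : ℂ} (hy1 : ‖y‖ ≤ 1)
    (hy : mu2 * c2 * normSq y = la2)
    (hx : mu1 * c1 * x ^ 2 + la1 = (la1 + la2 + mu1 * c1 + mu2 * c2 - 2 * (mu2 * c2) * y.re) * x) :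
    0 < (edgeFun la1 la2 p1 p2 π y).re ∧
      (edgeFun la1 la2 p1 p2 π y).arg = Real.arctan ((1 - p1 * p2) * (2 * (mu2 * c2) * x * y.im)
        / thetaDenom la1 la2 mu1 mu2 c1 c2 p1 p2 x) := by
  have hzero := hπ.swap.zero_pos hla2 hla1 ha2.le ha1 hp2 hp1.le
  have hswap := edgeFun_pos hla2 hla1 hp2 hp1 (mul_comm p1 p2 ▸ hp) hπ.swap.1 hzero
    (zero_le_real.2 hx0)
  obtain ⟨k, hk, hkeq⟩ := RCLike.pos_iff_exists_ofReal.1 hswap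
  have hboundary := hπ.edgeFun_mul_eq (by rw [norm_real, Real.norm_of_nonneg hx0]; exact hx1.le)
    hy1 (kernelPoly_eq_zero_of_normSq hy hx)
  rw [← hkeq] at hboundary
  have hre := two_mul_re_mul_conj_boundary_coeff (p1 := p1) (p2 := p2) hy hx
  have hre_pos := pos_of_mul_pos_right (hre ▸ mul_pos (sub_pos.2 hx1) hdenom) (by positivity)
  obtain ⟨hpos, harg⟩ := re_pos_and_arg_eq_arctan hboundary hk hre_pos
  refine ⟨hpos, harg.trans (congrArg Real.arctan ?_)⟩
  rw [im_mul_conj_boundary_coeff, div_eq_div_iff hre_pos.ne' hdenom.ne']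
  linear_combination ((p1 * p2 - 1) * x * y.im) * hre

theorem IsInvariantDist.re_edgeFun_circleMap_pos_and_arg_eq {π : ℕ × ℕ → ℝ} (hla1 : 0 < la1)
    (hla2 : 0 < la2) (ha1 : 0 < mu1 * c1) (ha2 : 0 < mu2 * c2) (hr0 : 0 < r) (hr1 : r < 1)
    (hr : mu2 * c2 * r ^ 2 = la2) (hp1 : 0 < p1) (hp2 : 0 ≤ p2) (hp : p1 * p2 ≤ 1)
    (hE2 : mu1 * c1 * p1 + mu2 * c2 < la1 * p1 + la2)
    (hπ : IsInvariantDist la1 la2 mu1 mu2 c1 c2 p1 p2 π) (θ : ℝ) :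
    0 < (edgeFun la1 la2 p1 p2 π (circleMap 0 r θ)).re ∧
      (edgeFun la1 la2 p1 p2 π (circleMap 0 r θ)).arg
        = boundaryArg la1 la2 mu1 mu2 c1 c2 p1 p2 r θ := by
  have hr1' : |r| < 1 := (abs_of_pos hr0).trans_lt hr1
  have hnorm : ‖circleMap 0 r θ‖ = r := by rw [norm_circleMap_zero, abs_of_pos hr0]
  obtain ⟨hpos, harg⟩ := hπ.re_edgeFun_pos_and_arg_eq hla1 hla2 ha1.le ha2 hp1 hp2 hp
    (kernelCurve_pos hla1 ha1 ha2 hr1' hr θ).le (kernelCurve_lt_one ha1 ha2 hr1' hr θ)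
    (thetaDenom_kernelCurve_pos hla1 hla2 ha1 ha2 hr0 hr1 hr hp1 hp2 hp hE2 θ)
    (hnorm.trans_le hr1.le) (by rw [normSq_eq_norm_sq, hnorm, hr])
    (by rw [circleMap_zero_eq_mk]; exact kernelCurve_eq ha1 ha2 hr1' hr θ)
  refine ⟨hpos, harg.trans ?_⟩
  rw [boundaryArg, circleMap_zero_eq_mk]
  congr 2
  ring

theorem IsInvariantDist.integral_boundaryArg {π : ℕ × ℕ → ℝ} (hla1 : 0 < la1)
    (hla2 : 0 < la2) (ha1 : 0 < mu1 * c1) (ha2 : 0 < mu2 * c2) (hr0 : 0 < r) (hr1 : r < 1)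
    (hr : mu2 * c2 * r ^ 2 = la2) (hp1 : 0 < p1) (hp2 : 0 ≤ p2) (hp : p1 * p2 ≤ 1)
    (hE2 : mu1 * c1 * p1 + mu2 * c2 < la1 * p1 + la2)
    (hπ : IsInvariantDist la1 la2 mu1 mu2 c1 c2 p1 p2 π) :
    ∫ θ in 0..2 * Real.pi, r * Real.sin θ / (1 - 2 * r * Real.cos θ + r ^ 2)
        * boundaryArg la1 la2 mu1 mu2 c1 c2 p1 p2 r θ
      = Real.pi * (Real.log ‖edgeFun la1 la2 p1 p2 π ((r : ℂ) ^ 2)‖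
        - Real.log ‖edgeFun la1 la2 p1 p2 π 0‖) := by
  have hboundary :=
    hπ.re_edgeFun_circleMap_pos_and_arg_eq hla1 hla2 ha1 ha2 hr0 hr1 hr hp1 hp2 hp hE2
  simp only [← (hboundary _).2]
  refine integral_mul_arg_circleMap hr0 hr1
    ((diffContOnCl_edgeFun hπ.summable).mono (Metric.ball_subset_ball hr1.le)) fun z hz => ?_
  obtain ⟨θ, rfl⟩ : z ∈ Set.range (circleMap 0 r) := by rwa [range_circleMap, abs_of_pos hr0]
  exact (hboundary θ).1

theorem IsInvariantDist.norm_edgeFun_zero {π : ℕ × ℕ → ℝ} (hla1 : 0 ≤ la1) (hla2 : 0 ≤ la2)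
    (hp2 : 0 ≤ p2) (hπ : IsInvariantDist la1 la2 mu1 mu2 c1 c2 p1 p2 π) :
    ‖edgeFun la1 la2 p1 p2 π 0‖ = (la1 + la2 * p2) * π (0, 0) := by
  have hnonneg := hπ.1 (0, 0)
  rw [edgeFun_zero, norm_real, Real.norm_of_nonneg (by positivity)]

theorem IsInvariantDist.norm_edgeFun_sq {π : ℕ × ℕ → ℝ} (hr1 : |r| ≤ 1)
    (hr : mu2 * c2 * r ^ 2 = la2) (hp1 : 0 < p1)
    (hE2 : mu1 * c1 * p1 + mu2 * c2 ≤ la1 * p1 + la2)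
    (hπ : IsInvariantDist la1 la2 mu1 mu2 c1 c2 p1 p2 π) :
    ‖edgeFun la1 la2 p1 p2 π ((r : ℂ) ^ 2)‖
      = (la2 + la1 * p1 - mu1 * c1 * p1 - mu2 * c2) / p1 := by
  have hvalue := congrArg (‖·‖) <| hπ.mul_edgeFun_eq (y := (r : ℂ) ^ 2)
    (by rw [norm_pow, norm_real]; exact pow_le_one₀ (norm_nonneg r) hr1) (mod_cast hr)
  rwa [norm_mul, norm_real, norm_real, Real.norm_of_nonneg hp1.le,
    Real.norm_of_nonneg (by linarith), mul_comm, ← eq_div_iff hp1.ne'] at hvalue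

theorem IsInvariantDist.phiY1_eq {x1 x2 : ℝ} {π : ℕ × ℕ → ℝ} (hla2 : 0 < la2) (ha1 : 0 < mu1 * c1)
    (hp1 : 0 < p1) (hp2 : 0 ≤ p2) (hp : p1 * p2 ≤ 1)
    (hE1 : la2 < mu2 * c2) (hE2 : mu1 * c1 * p1 + mu2 * c2 < la1 * p1 + la2)
    (hx12 : x1 < x2) (hx2 : x2 < 1) (hD1 : Delta2 la1 la2 mu1 mu2 c1 c2 x1 = 0)
    (hD2 : Delta2 la1 la2 mu1 mu2 c1 c2 x2 = 0)
    (hπ : IsInvariantDist la1 la2 mu1 mu2 c1 c2 p1 p2 π) :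
    phiY1 la1 la2 mu1 mu2 c1 c2 p1 p2 x1 x2
      = (la2 + la1 * p1 - mu1 * c1 * p1 - mu2 * c2) / p1 / ((la1 + la2 * p2) * π (0, 0)) := by
  have ha2 : 0 < mu2 * c2 := hla2.trans hE1
  have hla1 : 0 < la1 := ha1.trans (lt_of_mul_lt_mul_right (by linarith) hp1.le)
  obtain ⟨r, hr0, hr1, hr⟩ := exists_mul_sq_eq hla2 hE1
  have hr1' : |r| < 1 := (abs_of_pos hr0).trans_lt hr1
  have hdenom {θ} := thetaDenom_kernelCurve_pos hla1 hla2 ha1 ha2 hr0 hr1 hr hp1 hp2 hp hE2 θ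
  have hzero := hπ.zero_pos hla1 hla2 ha1.le ha2.le hp1.le hp2
  have hnum : 0 < la2 + la1 * p1 - mu1 * c1 * p1 - mu2 * c2 := by linarith
  obtain ⟨rfl, rfl⟩ := endpoints_eq_kernelCurve hla1 ha1 ha2 hr0 hr1' hr hx12 hx2 hD1 hD2
  rw [phiY1, integral_ThetaY_kernelCurve hla1 ha1 ha2 hr0.le hr1' hr fun θ => hdenom.ne',
    hπ.integral_boundaryArg hla1 hla2 ha1 ha2 hr0 hr1 hr hp1 hp2 hp hE2, one_div,
    inv_mul_cancel_left₀ Real.pi_ne_zero, hπ.norm_edgeFun_zero hla1.le hla2.le hp2,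
    hπ.norm_edgeFun_sq hr1'.le hr hp1 hE2.le, Real.exp_sub, Real.exp_log (by positivity),
    Real.exp_log (by positivity)]

end KernelCurve

theorem stmt17_general (la1 la2 mu1 mu2 c1 c2 p1 p2 x1 x2 : ℝ)
    (hla2 : 0 < la2) (ha1 : 0 < mu1 * c1)
    (hp1pos : 0 < p1) (hp2 : 0 ≤ p2) (hp : p1 * p2 ≤ 1)
    (hE1 : la2 < mu2 * c2) (hE2 : mu1 * c1 * p1 + mu2 * c2 < la1 * p1 + la2)
    (hx12 : x1 < x2) (hx2 : x2 < 1)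
    (hD1 : Delta2 la1 la2 mu1 mu2 c1 c2 x1 = 0)
    (hD2 : Delta2 la1 la2 mu1 mu2 c1 c2 x2 = 0)
    (π : ℕ × ℕ → ℝ) (hπ : IsInvariantDist la1 la2 mu1 mu2 c1 c2 p1 p2 π) :
    π (0, 0) = (la2 + la1 * p1 - mu1 * c1 * p1 - mu2 * c2)
        / (p1 * (la1 + la2 * p2) * phiY1 la1 la2 mu1 mu2 c1 c2 p1 p2 x1 x2) := by
  have hphi : phiY1 la1 la2 mu1 mu2 c1 c2 p1 p2 x1 x2 ≠ 0 := (Real.exp_pos _).ne'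
  rw [hπ.phiY1_eq hla2 ha1 hp1pos hp2 hp hE1 hE2 hx12 hx2 hD1 hD2] at hphi ⊢
  simp only [div_ne_zero_iff, mul_ne_zero_iff] at hphi
  obtain ⟨⟨hnum, -⟩, hrate, hzero⟩ := hphi
  generalize la2 + la1 * p1 - mu1 * c1 * p1 - mu2 * c2 = drift at *
  field_simp

theorem stmt17 (la1 la2 mu1 mu2 c1 c2 p1 p2 x1 x2 : ℝ)
    (hla1 : 0 < la1) (hla2 : 0 < la2) (hmu1 : 0 < mu1) (hmu2 : 0 < mu2)
    (hc1 : 0 < c1) (hc2 : 0 < c2)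
    (hp1pos : 0 < p1) (hp1' : p1 ≤ 1) (hp2 : 0 ≤ p2) (hp2' : p2 ≤ 1)
    (hp : p1 * p2 < 1)
    (hE1 : la2 < mu2 * c2) (hE2 : mu1 * c1 * p1 + mu2 * c2 < la1 * p1 + la2)
    (hx1 : 0 < x1) (hx12 : x1 < x2) (hx2 : x2 < 1)
    (hD1 : Delta2 la1 la2 mu1 mu2 c1 c2 x1 = 0)
    (hD2 : Delta2 la1 la2 mu1 mu2 c1 c2 x2 = 0)
    (hDneg : ∀ x ∈ Set.Ioo x1 x2, Delta2 la1 la2 mu1 mu2 c1 c2 x < 0)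
    (π : ℕ × ℕ → ℝ) (hπ : IsInvariantDist la1 la2 mu1 mu2 c1 c2 p1 p2 π) :
    π (0, 0) = (la2 + la1 * p1 - mu1 * c1 * p1 - mu2 * c2)
        / (p1 * (la1 + la2 * p2) * phiY1 la1 la2 mu1 mu2 c1 c2 p1 p2 x1 x2) :=
  stmt17_general la1 la2 mu1 mu2 c1 c2 p1 p2 x1 x2 hla2 (mul_pos hmu1 hc1) hp1pos hp2 hp.le hE1 hE2
    hx12 hx2 hD1 hD2 π hπ
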